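/- Let γ > 0 and ρ ∈ (−1, 1), and let (X₁, X₂) be a centered bivariate Gaussian vector with Var(X₁) = Var(X₂) = γ² and Cov(X₁, X₂) = ρ γ². Define V = γ²(1 − ρ²)(2 − ρ²)/((2 − ρ²)² − ρ²) and 𝓥 = γ²(1 − ρ²)/(2 − ρ²). Then E[X₁² X₂⁴ exp(−(X₁² + X₂²)/(2γ²))] = (3/γ)(2 − ρ²)^{−1/2} V^{5/2} (𝓥 + 5ρ² V/(2 − ρ²)²). -/

import Mathlib

open MeasureTheory Real

/-- The density of a centered bivariate Gaussian vector with `Var(X₁) = Var(X₂) = γ²`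
and correlation `ρ`, i.e. covariance matrix `γ²[[1, ρ],[ρ, 1]]`. -/
noncomputable def bivGaussDens (γ ρ x₁ x₂ : ℝ) : ℝ :=
  (2 * Real.pi * γ ^ 2 * Real.sqrt (1 - ρ ^ 2))⁻¹ *
    Real.exp (-(x₁ ^ 2 - 2 * ρ * x₁ * x₂ + x₂ ^ 2) / (2 * γ ^ 2 * (1 - ρ ^ 2)))

/-! Multiplying the density by `exp (-(x₁ ^ 2 + x₂ ^ 2) / (2 * γ ^ 2))` adds `γ⁻²` to both diagonal
entries of the precision matrix, so the weighted density is still, up to a constant factor, a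
centered bivariate Gaussian density. Completing the square in `x₁` splits it into
`X₂ ~ N(0, V)` and `X₁ | X₂ ~ N(ρ X₂ / (2 - ρ ^ 2), 𝓥)`. Hence `X₁ = U + ρ X₂ / (2 - ρ ^ 2)` with
`U ~ N(0, 𝓥)` independent of `X₂`, and only one-dimensional Gaussian moments remain; these follow
from Stein's identity. -/

open ProbabilityTheory
open scoped NNReal Nat

lemma doubleFactorial_two_mul_add_one_sub_one (n : ℕ) :
    (2 * (n + 1) - 1)‼ = (2 * n + 1) * (2 * n - 1)‼ := by
  rw [show 2 * (n + 1) - 1 = 2 * n + 1 by lia, Nat.doubleFactorial_add_one]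

section GaussianMoments

variable (m : ℝ) (v : ℝ≥0)

lemma hasDerivAt_gaussianPDFReal (x : ℝ) :
    HasDerivAt (gaussianPDFReal m v) (-((x - m) / v) * gaussianPDFReal m v x) x := by
  have h := ((((hasDerivAt_id' x).sub_const m).fun_pow 2).fun_neg.div_const (2 * v : ℝ)).exp
  refine (h.const_mul (√(2 * π * v))⁻¹).congr_deriv ?_
  rw [gaussianPDFReal]
  ring

lemma integrable_sub_pow_gaussianReal (a : ℝ) (n : ℕ) :
    Integrable (fun x ↦ (x - a) ^ n) (gaussianReal m v) := by
  have h : MemLp (fun x ↦ x - a) n (gaussianReal m v) :=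
    (memLp_id_gaussianReal' n (by simp)).sub (memLp_const a)
  refine (integrable_norm_iff (by fun_prop)).1 ?_
  simpa only [norm_pow] using h.integrable_norm_pow'

variable {m v}

lemma integrable_gaussianReal_iff_integrable_smul {E : Type*} [NormedAddCommGroup E]
    [NormedSpace ℝ E] {f : ℝ → E} (hv : v ≠ 0) :
    Integrable f (gaussianReal m v) ↔ Integrable (fun x ↦ gaussianPDFReal m v x • f x) := by
  rw [gaussianReal_of_var_ne_zero m hv, integrable_withDensity_iff_integrable_smul'
    (measurable_gaussianPDF m v) (ae_of_all _ fun _ ↦ gaussianPDF_lt_top)]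
  simp only [toReal_gaussianPDF]

/-- **Stein's identity**: integration by parts against the Gaussian density. -/
lemma integral_sub_mul_gaussianReal {f f' : ℝ → ℝ} (hf : ∀ x, HasDerivAt f (f' x) x)
    (hfi : Integrable f (gaussianReal m v))
    (hxf : Integrable (fun x ↦ (x - m) * f x) (gaussianReal m v))
    (hf' : Integrable f' (gaussianReal m v)) :
    ∫ x, (x - m) * f x ∂gaussianReal m v = v * ∫ x, f' x ∂gaussianReal m v := by
  rcases eq_or_ne v 0 with rfl | hv
  · simp
  have hderiv (x : ℝ) : HasDerivAt (fun x ↦ gaussianPDFReal m v x • f x)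
      (gaussianPDFReal m v x • (f' x - (v : ℝ)⁻¹ * ((x - m) * f x))) x := by
    refine ((hasDerivAt_gaussianPDFReal m v x).smul (hf x)).congr_deriv ?_
    simp only [smul_eq_mul]
    ring
  have hint := hf'.sub (hxf.const_mul (v : ℝ)⁻¹)
  have h := integral_eq_zero_of_hasDerivAt_of_integrable hderiv
    ((integrable_gaussianReal_iff_integrable_smul hv).1 hint)
    ((integrable_gaussianReal_iff_integrable_smul hv).1 hfi)
  rw [← integral_gaussianReal_eq_integral_smul hv, integral_sub hf' (hxf.const_mul _),
    integral_const_mul, sub_eq_zero] at h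
  rw [h, mul_inv_cancel_left₀ (NNReal.coe_ne_zero.2 hv)]

variable (m v)

lemma integral_sub_pow_add_two_gaussianReal (n : ℕ) :
    ∫ x, (x - m) ^ (n + 2) ∂gaussianReal m v
      = (n + 1) * v * ∫ x, (x - m) ^ n ∂gaussianReal m v := by
  have hderiv (x : ℝ) :
      HasDerivAt (fun x ↦ (x - m) ^ (n + 1)) ((n + 1) * (x - m) ^ n) x := by
    simpa using ((hasDerivAt_id' x).sub_const m).fun_pow (n + 1)
  have hint := integrable_sub_pow_gaussianReal m v m
  have h := integral_sub_mul_gaussianReal hderiv (hint (n + 1))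
    (by simpa only [← pow_succ'] using hint (n + 2)) ((hint n).const_mul _)
  simp only [← pow_succ', integral_const_mul] at h
  rw [h]
  ring

lemma integral_sub_pow_two_mul_gaussianReal (n : ℕ) :
    ∫ x, (x - m) ^ (2 * n) ∂gaussianReal m v = (2 * n - 1)‼ * v ^ n := by
  induction n with
  | zero => simp
  | succ n ih =>
    rw [doubleFactorial_two_mul_add_one_sub_one, mul_add_one,
      integral_sub_pow_add_two_gaussianReal, ih]
    push_cast
    ring

end GaussianMoments

section ConditionalGaussian

lemma measurePreserving_add_comp_snd {G α : Type*} [AddGroup G] [MeasurableSpace G]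
    [MeasurableAdd₂ G] [MeasurableSpace α] (μ : Measure G) [SFinite μ] [μ.IsAddRightInvariant]
    (ν : Measure α) [SFinite ν] {g : α → G} (hg : Measurable g) :
    MeasurePreserving (fun p : G × α ↦ (p.1 + g p.2, p.2)) (μ.prod ν) (μ.prod ν) := by
  have h : MeasurePreserving (fun p : α × G ↦ (p.1, p.2 + g p.1)) (ν.prod μ) (ν.prod μ) :=
    (MeasurePreserving.id ν).skew_product (by fun_prop)
      (ae_of_all _ fun a ↦ map_add_right_eq_self μ (g a))
  exact Measure.measurePreserving_swap.comp (h.comp Measure.measurePreserving_swap)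

variable {E : Type*} [NormedAddCommGroup E] [NormedSpace ℝ E] {v w : ℝ≥0}

lemma integral_gaussianReal_prod_eq_integral_smul (m₁ m₂ : ℝ) (hv : v ≠ 0) (hw : w ≠ 0)
    (f : ℝ × ℝ → E) :
    ∫ p, f p ∂(gaussianReal m₁ v).prod (gaussianReal m₂ w)
      = ∫ p : ℝ × ℝ, (gaussianPDFReal m₁ v p.1 * gaussianPDFReal m₂ w p.2) • f p := by
  rw [gaussianReal_of_var_ne_zero m₁ hv, gaussianReal_of_var_ne_zero m₂ hw,
    prod_withDensity (by fun_prop) (by fun_prop),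
    integral_withDensity_eq_integral_toReal_smul (by fun_prop)
      (ae_of_all _ fun _ ↦ ENNReal.mul_lt_top gaussianPDF_lt_top gaussianPDF_lt_top)]
  simp only [ENNReal.toReal_mul, toReal_gaussianPDF, Measure.volume_eq_prod]

lemma integral_gaussianPDFReal_mul_gaussianPDFReal_smul (m : ℝ) (hv : v ≠ 0) (hw : w ≠ 0)
    {g : ℝ → ℝ} (hg : Measurable g) (f : ℝ × ℝ → E) :
    ∫ p : ℝ × ℝ, (gaussianPDFReal (g p.2) v p.1 * gaussianPDFReal m w p.2) • f p
      = ∫ p, f (p.1 + g p.2, p.2) ∂(gaussianReal 0 v).prod (gaussianReal m w) := by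
  have hshear := measurePreserving_add_comp_snd (volume : Measure ℝ) (volume : Measure ℝ) hg
  have hinj : Function.Injective (fun p : ℝ × ℝ ↦ (p.1 + g p.2, p.2)) := by
    rintro ⟨x, y⟩ ⟨x', y'⟩ h
    obtain ⟨hx, rfl : y = y'⟩ := Prod.mk.inj h
    exact congrArg (·, y) (add_right_cancel hx)
  rw [integral_gaussianReal_prod_eq_integral_smul 0 m hv hw, Measure.volume_eq_prod,
    ← hshear.integral_comp (hshear.measurable.measurableEmbedding hinj)]
  simp only [gaussianPDFReal, add_sub_cancel_right, sub_zero]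

lemma integral_sq_mul_pow_two_mul_gaussianReal_prod (v w : ℝ≥0) (c : ℝ) (n : ℕ) :
    ∫ p : ℝ × ℝ, (p.1 + c * p.2) ^ 2 * p.2 ^ (2 * n) ∂(gaussianReal 0 v).prod (gaussianReal 0 w)
      = (2 * n - 1)‼ * w ^ n * (v + (2 * n + 1) * c ^ 2 * w) := by
  have hint (u : ℝ≥0) (k : ℕ) : Integrable (fun x ↦ x ^ k) (gaussianReal 0 u) := by
    simpa only [sub_zero] using integrable_sub_pow_gaussianReal 0 u 0 k
  have hmoment (u : ℝ≥0) (k : ℕ) :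
      ∫ x, x ^ (2 * k) ∂gaussianReal 0 u = (2 * k - 1)‼ * u ^ k := by
    simpa only [sub_zero] using integral_sub_pow_two_mul_gaussianReal 0 u k
  have hmass : ∫ x, x ^ 0 ∂gaussianReal 0 v = 1 := by simp
  have hmean : ∫ x, x ^ 1 ∂gaussianReal 0 v = 0 := by simp
  have hvar : ∫ x, x ^ 2 ∂gaussianReal 0 v = v := by simpa using hmoment v 1
  have hprod (i j : ℕ) := (hint v i).mul_prod (hint w j)
  have hfactor (i j : ℕ) :
      ∫ p : ℝ × ℝ, p.1 ^ i * p.2 ^ j ∂(gaussianReal 0 v).prod (gaussianReal 0 w)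
        = (∫ x, x ^ i ∂gaussianReal 0 v) * ∫ y, y ^ j ∂gaussianReal 0 w :=
    integral_prod_mul (· ^ i) (· ^ j)
  have hexpand (p : ℝ × ℝ) : (p.1 + c * p.2) ^ 2 * p.2 ^ (2 * n)
      = p.1 ^ 2 * p.2 ^ (2 * n)
        + 2 * c * (p.1 ^ 1 * p.2 ^ (2 * n + 1))
        + c ^ 2 * (p.1 ^ 0 * p.2 ^ (2 * (n + 1))) := by
    ring
  simp only [hexpand]
  rw [integral_add ((hprod _ _).fun_add ((hprod _ _).const_mul _)) ((hprod _ _).const_mul _),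
    integral_add (hprod _ _) ((hprod _ _).const_mul _), integral_const_mul, integral_const_mul,
    hfactor, hfactor, hfactor, hmass, hmean, hvar, hmoment, hmoment,
    doubleFactorial_two_mul_add_one_sub_one]
  push_cast
  ring

end ConditionalGaussian

section TiltedDensity

lemma gaussianPDFReal_mul_gaussianPDFReal (m₁ m₂ : ℝ) (v w : ℝ≥0) (x y : ℝ) :
    gaussianPDFReal m₁ v x * gaussianPDFReal m₂ w y
      = (2 * π * √(v * w))⁻¹ * rexp (-(x - m₁) ^ 2 / (2 * v) + -(y - m₂) ^ 2 / (2 * w)) := by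
  have hsqrt : √(2 * π * v) * √(2 * π * w) = 2 * π * √(v * w) := by
    rw [Real.sqrt_mul two_pi_pos.le, Real.sqrt_mul two_pi_pos.le, mul_mul_mul_comm,
      Real.mul_self_sqrt two_pi_pos.le, Real.sqrt_mul v.coe_nonneg]
  rw [gaussianPDFReal, gaussianPDFReal, ← hsqrt, Real.exp_add]
  ring

variable {γ ρ : ℝ}

lemma one_sub_sq_pos (hρ : |ρ| < 1) : 0 < 1 - ρ ^ 2 :=
  sub_pos.2 ((sq_lt_one_iff_abs_lt_one ρ).2 hρ)

lemma two_sub_sq_sq_sub_sq_pos (hρ : |ρ| < 1) : 0 < (2 - ρ ^ 2) ^ 2 - ρ ^ 2 := by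
  nlinarith [one_sub_sq_pos hρ]

variable {V 𝓥 : ℝ≥0}

lemma exp_mul_bivGaussDens (hγ : 0 < γ) (hρ : |ρ| < 1)
    (hV : V = γ ^ 2 * (1 - ρ ^ 2) * (2 - ρ ^ 2) / ((2 - ρ ^ 2) ^ 2 - ρ ^ 2))
    (h𝓥 : 𝓥 = γ ^ 2 * (1 - ρ ^ 2) / (2 - ρ ^ 2)) (x y : ℝ) :
    rexp (-(x ^ 2 + y ^ 2) / (2 * γ ^ 2)) * bivGaussDens γ ρ x y
      = √V / (γ * √(2 - ρ ^ 2))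
        * (gaussianPDFReal (ρ / (2 - ρ ^ 2) * y) 𝓥 x * gaussianPDFReal 0 V y) := by
  have hq := one_sub_sq_pos hρ
  have hs : 0 < 2 - ρ ^ 2 := by linarith
  have hd := two_sub_sq_sq_sub_sq_pos hρ
  have hsquare : -(x - ρ / (2 - ρ ^ 2) * y) ^ 2 / (2 * 𝓥) + -(y - 0) ^ 2 / (2 * V)
      = -(x ^ 2 + y ^ 2) / (2 * γ ^ 2)
        + -(x ^ 2 - 2 * ρ * x * y + y ^ 2) / (2 * γ ^ 2 * (1 - ρ ^ 2)) := by
    rw [hV, h𝓥]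
    field_simp
    ring
  have hVpos : (0 : ℝ) < V := by rw [hV]; positivity
  have hconst : √(𝓥 * V) = γ * √(1 - ρ ^ 2) / √(2 - ρ ^ 2) * √V := by
    rw [Real.sqrt_mul (by positivity), h𝓥, Real.sqrt_div (by positivity),
      Real.sqrt_mul (by positivity), Real.sqrt_sq hγ.le]
  rw [gaussianPDFReal_mul_gaussianPDFReal, hsquare, hconst, Real.exp_add, bivGaussDens]
  field_simp

lemma integral_mul_exp_mul_bivGaussDens (hγ : 0 < γ) (hρ : |ρ| < 1)
    (hV : V = γ ^ 2 * (1 - ρ ^ 2) * (2 - ρ ^ 2) / ((2 - ρ ^ 2) ^ 2 - ρ ^ 2))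
    (h𝓥 : 𝓥 = γ ^ 2 * (1 - ρ ^ 2) / (2 - ρ ^ 2)) (f : ℝ × ℝ → ℝ) :
    ∫ p : ℝ × ℝ, f p * rexp (-(p.1 ^ 2 + p.2 ^ 2) / (2 * γ ^ 2)) * bivGaussDens γ ρ p.1 p.2
      = √V / (γ * √(2 - ρ ^ 2)) * ∫ p, f (p.1 + ρ / (2 - ρ ^ 2) * p.2, p.2)
          ∂(gaussianReal 0 𝓥).prod (gaussianReal 0 V) := by
  have hq := one_sub_sq_pos hρ
  have hs : 0 < 2 - ρ ^ 2 := by linarith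
  have hd := two_sub_sq_sq_sub_sq_pos hρ
  have hV0 : V ≠ 0 := NNReal.coe_ne_zero.1 (by rw [hV]; positivity)
  have h𝓥0 : 𝓥 ≠ 0 := NNReal.coe_ne_zero.1 (by rw [h𝓥]; positivity)
  rw [← integral_gaussianPDFReal_mul_gaussianPDFReal_smul 0 h𝓥0 hV0 (measurable_const_mul _),
    ← integral_const_mul]
  congr! 2
  rw [mul_assoc, exp_mul_bivGaussDens hγ hρ hV h𝓥, smul_eq_mul]
  ring

end TiltedDensity

theorem stmt13_general (γ ρ : ℝ) (hγ : 0 < γ) (hρ : -1 < ρ ∧ ρ < 1) (V 𝓥 : ℝ)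
    (hV : V = γ ^ 2 * (1 - ρ ^ 2) * (2 - ρ ^ 2) / ((2 - ρ ^ 2) ^ 2 - ρ ^ 2))
    (h𝓥 : 𝓥 = γ ^ 2 * (1 - ρ ^ 2) / (2 - ρ ^ 2)) (n : ℕ) :
    ∫ p : ℝ × ℝ, p.1 ^ 2 * p.2 ^ (2 * n) * rexp (-(p.1 ^ 2 + p.2 ^ 2) / (2 * γ ^ 2))
        * bivGaussDens γ ρ p.1 p.2
      = (2 * n - 1)‼ / γ * (2 - ρ ^ 2) ^ (-(1 : ℝ) / 2) * V ^ ((2 * n + 1 : ℝ) / 2)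
          * (𝓥 + (2 * n + 1) * ρ ^ 2 * V / (2 - ρ ^ 2) ^ 2) := by
  have hq := one_sub_sq_pos (abs_lt.2 hρ)
  have hs : 0 < 2 - ρ ^ 2 := by linarith
  have hd := two_sub_sq_sq_sub_sq_pos (abs_lt.2 hρ)
  have hVpos : 0 < V := by rw [hV]; positivity
  have hVpow : V ^ ((2 * n + 1 : ℝ) / 2) = √V * V ^ n := by
    rw [show (2 * n + 1 : ℝ) / 2 = 1 / 2 + n by ring, Real.rpow_add hVpos, Real.rpow_natCast,
      Real.sqrt_eq_rpow]
  have hspow : (2 - ρ ^ 2) ^ (-(1 : ℝ) / 2) = (√(2 - ρ ^ 2))⁻¹ := by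
    rw [neg_div, Real.rpow_neg hs.le, Real.sqrt_eq_rpow]
  rw [hVpow, hspow]
  lift V to ℝ≥0 using hVpos.le
  lift 𝓥 to ℝ≥0 using by rw [h𝓥]; positivity
  rw [integral_mul_exp_mul_bivGaussDens hγ (abs_lt.2 hρ) hV h𝓥 (fun p ↦ p.1 ^ 2 * p.2 ^ (2 * n)),
    integral_sq_mul_pow_two_mul_gaussianReal_prod, div_pow]
  ring

/-- For a centered bivariate Gaussian `(X₁, X₂)` with common variance `γ²` and
correlation `ρ`, with `V = γ²(1−ρ²)(2−ρ²)/((2−ρ²)²−ρ²)` and `𝓥 = γ²(1−ρ²)/(2−ρ²)`: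
`E[X₁² X₂⁴ exp(−(X₁²+X₂²)/(2γ²))] = (3/γ)(2−ρ²)^{−1/2} V^{5/2}(𝓥 + 5ρ²V/(2−ρ²)²)`. -/
theorem stmt13 (γ ρ : ℝ) (hγ : 0 < γ) (hρ : -1 < ρ ∧ ρ < 1)
    (V 𝓥 : ℝ)
    (hV : V = γ ^ 2 * (1 - ρ ^ 2) * (2 - ρ ^ 2) / ((2 - ρ ^ 2) ^ 2 - ρ ^ 2))
    (h𝓥 : 𝓥 = γ ^ 2 * (1 - ρ ^ 2) / (2 - ρ ^ 2)) :
    ∫ p : ℝ × ℝ, p.1 ^ 2 * p.2 ^ 4 * Real.exp (-(p.1 ^ 2 + p.2 ^ 2) / (2 * γ ^ 2))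
        * bivGaussDens γ ρ p.1 p.2
      = (3 / γ) * (2 - ρ ^ 2) ^ (-(1 : ℝ) / 2) * V ^ ((5 : ℝ) / 2)
          * (𝓥 + 5 * ρ ^ 2 * V / (2 - ρ ^ 2) ^ 2) := by
  convert stmt13_general γ ρ hγ hρ V 𝓥 hV h𝓥 2 using 4 <;> norm_num [Nat.doubleFactorial]
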